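/- arXiv:2402.16549 — 4 statements merged into one kernel-verified Lean document; each statement's English description precedes it below -/
import Mathlib

section
/- Let (T, M) be a Noetherian local ring with M not an associated prime of T, and let P be a minimal prime ideal of T with dim(T/P) = n. Then there exists a saturated chain of prime ideals P ⊊ Q₁ ⊊ ⋯ ⊊ Q_{n−1} ⊊ M such that for each i, Qᵢ is not an associated prime of T and P is the only minimal prime ideal of T contained in Qᵢ. -/
/-!
Let `p < q < r` be primes of a Noetherian ring and let `x ∉ p`. By Krull's principal ideal theorem,
the primes minimal over `p + (x)` cover `p`, so `r` is none of them, and prime avoidance gives some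
`y ∈ r` outside all of these finitely many primes. A prime minimal over `p + (y)` also covers `p`;
it cannot contain `x`, as it would then be minimal over `p + (x)`. Hence `q` can be replaced by a
prime avoiding `x`, and, taking for `x` a suitable product, by one containing none of finitely many
prescribed ideals not contained in `p`, such as the associated primes not contained in `P`.
If moreover `r` was the third member of a chain of length `dim T/p` starting at `p`, the new prime
has coheight one less than `p`, hence covers `p`, and the construction continues from it.
-/

section Preorder

variable {α : Type*} [Preorder α]

lemma covBy_of_coheight_eq_coe_add_one {a b : α} {n : ℕ} (hab : a < b)
    (ha : Order.coheight a = n + 1) (hb : Order.coheight b = n) : a ⋖ b := by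
  refine ⟨hab, fun c hac hcb => ?_⟩
  have hbc : Order.coheight b < Order.coheight c := Order.coheight_strictAnti hcb (by simp [hb])
  have hcn : Order.coheight c ≤ n := (Order.coheight_eq_coe_add_one_iff.1 ha).2.2 c hac
  exact hbc.not_ge (hcn.trans_eq hb.symm)

variable {A : α → Prop}

lemma exists_covBy_coheight_eq_coe_add_one
    (hA : ∀ ⦃p q r⦄, A p → p < q → q < r → ∃ s, A s ∧ p < s ∧ s < r)
    {n : ℕ} {p : α} (hp : Order.coheight p = n + 1 + 1) (hpA : A p) :
    ∃ s, A s ∧ p ⋖ s ∧ Order.coheight s = n + 1 := by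
  obtain ⟨-, ⟨q, hpq, hq⟩, hmax⟩ := Order.coheight_eq_coe_add_one_iff.1 (mod_cast hp)
  obtain ⟨-, ⟨r, hqr, hr⟩, -⟩ := Order.coheight_eq_coe_add_one_iff.1 (mod_cast hq)
  obtain ⟨s, hsA, hps, hsr⟩ := hA hpA hpq hqr
  have hs : Order.coheight s = (n + 1 : ℕ) :=
    (hmax s hps).antisymm (by simpa [hr] using Order.coheight_add_one_le hsr)
  exact ⟨s, hsA, covBy_of_coheight_eq_coe_add_one hps (mod_cast hp) hs, mod_cast hs⟩

lemma exists_covBy_chain_of_coheight_eq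
    (hA : ∀ ⦃p q r⦄, A p → p < q → q < r → ∃ s, A s ∧ p < s ∧ s < r)
    {n : ℕ} {p : α} (hp : Order.coheight p = n) (hpA : A p) :
    ∃ f : Fin (n + 1) → α, f 0 = p ∧ IsMax (f (Fin.last n)) ∧
      (∀ i : Fin n, f i.castSucc ⋖ f i.succ) ∧ ∀ i ≠ Fin.last n, A (f i) := by
  induction n generalizing p with
  | zero => exact ⟨fun _ => p, rfl, by simpa using hp, nofun, fun i hi => (hi (by omega)).elim⟩
  | succ n ih =>
    cases n with
    | zero =>
      obtain ⟨-, ⟨q, hpq, hq⟩, -⟩ := Order.coheight_eq_coe_add_one_iff.1 (mod_cast hp)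
      have hcov : p ⋖ q := covBy_of_coheight_eq_coe_add_one hpq (mod_cast hp) hq
      exact ⟨![p, q], rfl, Order.coheight_eq_zero.1 (mod_cast hq), by simpa using hcov,
        by simpa [Fin.forall_fin_two] using hpA⟩
    | succ n =>
      obtain ⟨s, hsA, hps, hs⟩ := exists_covBy_coheight_eq_coe_add_one hA (mod_cast hp) hpA
      obtain ⟨f, rfl, hmax, hcov, hfA⟩ := ih (mod_cast hs) hsA
      exact ⟨Fin.cons p f, rfl, hmax, Fin.cases hps hcov,
        Fin.cases (fun _ => hpA) fun i hi => hfA i fun h => hi (h ▸ rfl)⟩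

end Preorder

section PrimeSpectrum

variable {R : Type*} [CommRing R]

lemma ringKrullDim_quotient_eq_coheight (p : PrimeSpectrum R) :
    ringKrullDim (R ⧸ p.asIdeal) = Order.coheight p := by
  have hIci : PrimeSpectrum.zeroLocus (p.asIdeal : Set R) = Set.Ici p := rfl
  rw [ringKrullDim_quotient, hIci, Order.coheight_eq_krullDim_Ici]

variable [IsNoetherianRing R]

lemma covBy_of_mem_minimalPrimes_sup_span_singleton {p q : PrimeSpectrum R} {x : R} (hpq : p < q)
    (hq : q.asIdeal ∈ (p.asIdeal ⊔ Ideal.span {x}).minimalPrimes) : p ⋖ q := by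
  refine ⟨hpq, fun m hpm hmq => ?_⟩
  have hxq : x ∈ q.asIdeal := hq.le (Ideal.mem_sup_right (Ideal.mem_span_singleton_self x))
  obtain ⟨s, hxs, hps, hsq⟩ := PrimeSpectrum.exist_mem_one_of_mem_two hpm hmq hxq
  have hle : p.asIdeal ⊔ Ideal.span {x} ≤ s.asIdeal :=
    sup_le hps.le ((Ideal.span_singleton_le_iff_mem _).2 hxs)
  exact hsq.not_ge (hq.2 ⟨s.isPrime, hle⟩ hsq.le)

lemma exists_covBy_le_mem_minimalPrimes_sup_span_singleton {p r : PrimeSpectrum R} {x : R}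
    (hpr : p ≤ r) (hxp : x ∉ p.asIdeal) (hxr : x ∈ r.asIdeal) :
    ∃ q : PrimeSpectrum R,
      p ⋖ q ∧ q ≤ r ∧ q.asIdeal ∈ (p.asIdeal ⊔ Ideal.span {x}).minimalPrimes := by
  obtain ⟨q, hq, hqr⟩ := Ideal.exists_minimalPrimes_le
    (sup_le hpr ((Ideal.span_singleton_le_iff_mem _).2 hxr))
  have hxq : x ∈ q := hq.le (Ideal.mem_sup_right (Ideal.mem_span_singleton_self x))
  have hpq : p < ⟨q, hq.isPrime⟩ :=
    lt_of_le_not_ge (le_sup_left.trans hq.le) fun hqp => hxp (hqp hxq)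
  exact ⟨⟨q, hq.isPrime⟩, covBy_of_mem_minimalPrimes_sup_span_singleton hpq hq, hqr, hq⟩

lemma exists_mem_forall_minimalPrimes_notMem {p q r : PrimeSpectrum R} (hpq : p < q) (hqr : q < r)
    (x : R) : ∃ y ∈ r.asIdeal, ∀ m ∈ (p.asIdeal ⊔ Ideal.span {x}).minimalPrimes, y ∉ m := by
  by_contra! h
  have hsub : (r.asIdeal : Set R) ⊆ ⋃ m ∈ (p.asIdeal ⊔ Ideal.span {x}).minimalPrimes, m :=
    fun y hy => by simpa using h y hy
  have hfin := (p.asIdeal ⊔ Ideal.span {x}).finite_minimalPrimes_of_isNoetherianRing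
  obtain ⟨m, hm, hrm⟩ :=
    (Ideal.subset_union_prime_finite hfin ⊥ ⊥ fun m hm _ _ => hm.isPrime).1 hsub
  have hqm : q < ⟨m, hm.isPrime⟩ := hqr.trans_le hrm
  exact (covBy_of_mem_minimalPrimes_sup_span_singleton (hpq.trans hqm) hm).2 hpq hqm

lemma exists_prime_between_notMem {p q r : PrimeSpectrum R} (hpq : p < q) (hqr : q < r) {x : R}
    (hxp : x ∉ p.asIdeal) : ∃ s, p < s ∧ s < r ∧ x ∉ s.asIdeal := by
  by_cases hxr : x ∈ r.asIdeal
  swap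
  · exact ⟨q, hpq, hqr, fun hxq => hxr (hqr.le hxq)⟩
  have hpr : p ≤ r := (hpq.trans hqr).le
  obtain ⟨y, hyr, hy⟩ := exists_mem_forall_minimalPrimes_notMem hpq hqr x
  have hyp : y ∉ p.asIdeal := fun hyp => by
    obtain ⟨m, hpm, -, hm⟩ := exists_covBy_le_mem_minimalPrimes_sup_span_singleton hpr hxp hxr
    exact hy _ hm (hpm.le hyp)
  obtain ⟨s, hps, hsr, hs⟩ := exists_covBy_le_mem_minimalPrimes_sup_span_singleton hpr hyp hyr
  have hys : y ∈ s.asIdeal := hs.le (Ideal.mem_sup_right (Ideal.mem_span_singleton_self y))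
  have hxs : x ∉ s.asIdeal := fun hxs => by
    obtain ⟨m, hpm, hms, hm⟩ :=
      exists_covBy_le_mem_minimalPrimes_sup_span_singleton hps.le hxp hxs
    have hmeq : m = s := hms.eq_of_not_lt (hps.2 hpm.lt)
    exact hy _ hm (hmeq ▸ hys)
  exact ⟨s, hps.lt, lt_of_le_not_ge hsr fun hrs => hxs (hrs hxr), hxs⟩

lemma exists_prime_between_forall_not_le {S : Set (Ideal R)} (hS : S.Finite)
    {p q r : PrimeSpectrum R} (hpS : ∀ J ∈ S, ¬ J ≤ p.asIdeal) (hpq : p < q) (hqr : q < r) :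
    ∃ s : PrimeSpectrum R, (∀ J ∈ S, ¬ J ≤ s.asIdeal) ∧ p < s ∧ s < r := by
  have hprod (s : PrimeSpectrum R) : ∏ J ∈ hS.toFinset, J ≤ s.asIdeal ↔ ∃ J ∈ S, J ≤ s.asIdeal := by
    simpa using s.isPrime.prod_le (s := hS.toFinset) (f := id)
  have hp : ¬ ∏ J ∈ hS.toFinset, J ≤ p.asIdeal := by simpa [hprod] using hpS
  obtain ⟨x, hx, hxp⟩ := SetLike.not_le_iff_exists.1 hp
  obtain ⟨s, hps, hsr, hxs⟩ := exists_prime_between_notMem hpq hqr hxp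
  exact ⟨s, fun J hJ hJs => hxs ((hprod s).2 ⟨J, hJ, hJs⟩ hx), hps, hsr⟩

end PrimeSpectrum

theorem statement_1_general (T : Type*) [CommRing T] [IsNoetherianRing T]
    (P : Ideal T) [P.IsPrime] (n : ℕ) (hdim : ringKrullDim (T ⧸ P) = n) :
    ∃ f : Fin (n + 1) → PrimeSpectrum T,
      (f 0).asIdeal = P ∧
      (f (Fin.last n)).asIdeal.IsMaximal ∧
      (∀ i : Fin n, f i.castSucc ⋖ f i.succ) ∧
      (∀ i : Fin (n + 1), i ≠ 0 → i ≠ Fin.last n →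
        (f i).asIdeal ∉ associatedPrimes T T ∧
        ∀ P' ∈ minimalPrimes T, P' ≤ (f i).asIdeal → P' ≤ P) := by
  let p : PrimeSpectrum T := ⟨P, ‹_›⟩
  have hp : Order.coheight p = n := mod_cast (ringKrullDim_quotient_eq_coheight p).symm.trans hdim
  let S : Set (Ideal T) := {J ∈ associatedPrimes T T | ¬ J ≤ P}
  have hS : S.Finite := (associatedPrimes.finite T T).subset (Set.sep_subset _ _)
  obtain ⟨f, hf0, hmax, hcov, hfS⟩ := exists_covBy_chain_of_coheight_eq
    (fun _ _ _ => exists_prime_between_forall_not_le hS) hp fun J hJ => hJ.2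
  have hle {i} (hi : i ≠ Fin.last n) {J} (hJ : J ∈ associatedPrimes T T)
      (hJi : J ≤ (f i).asIdeal) : J ≤ P := not_not.1 fun hJP => hfS i hi J ⟨hJ, hJP⟩ hJi
  have hmono : StrictMono f := Fin.strictMono_iff_lt_succ.2 fun i => (hcov i).lt
  refine ⟨f, congrArg _ hf0, PrimeSpectrum.isMax_iff.1 hmax, hcov, fun i hi0 hi => ⟨?_, ?_⟩⟩
  · have hPi : p < f i := hf0 ▸ hmono (Fin.pos_iff_ne_zero.2 hi0)
    exact fun hass => hPi.not_ge (hle hi hass le_rfl)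
  · have hmin : minimalPrimes T ⊆ associatedPrimes T T := by
      simpa [minimalPrimes, Module.annihilator_eq_bot.2] using
        Module.associatedPrimes.minimalPrimes_annihilator_subset_associatedPrimes T T
    exact fun P' hP' => hle hi (hmin hP')

/-- Small, Lemma 2.8. -/
theorem statement_1 (T : Type*) [CommRing T] [IsNoetherianRing T] [IsLocalRing T]
    (hM : IsLocalRing.maximalIdeal T ∉ associatedPrimes T T)
    (P : Ideal T) (hP : P ∈ minimalPrimes T) (n : ℕ)
    (hdim : ringKrullDim (T ⧸ P) = n) :
    ∃ f : Fin (n + 1) → PrimeSpectrum T,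
      (f 0).asIdeal = P ∧
      (f (Fin.last n)).asIdeal = IsLocalRing.maximalIdeal T ∧
      (∀ i : Fin n, f i.castSucc ⋖ f i.succ) ∧
      (∀ i : Fin (n + 1), i ≠ 0 → i ≠ Fin.last n →
        (f i).asIdeal ∉ associatedPrimes T T ∧
        ∀ P' ∈ minimalPrimes T, P' ≤ (f i).asIdeal → P' = P) := by
  have := hP.isPrime
  obtain ⟨f, hf0, hmax, hcov, hf⟩ := statement_1_general T P n hdim
  exact ⟨f, hf0, IsLocalRing.eq_maximalIdeal hmax, hcov, fun i hi0 hi =>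
    (hf i hi0 hi).imp_right fun hle P' hP' hPi =>
      (hle P' hP' hPi).antisymm (hP.2 hP'.1 (hle P' hP' hPi))⟩
end

section
/- Let (T, M) be a Noetherian local catenary ring with depth T ≥ 2, and let P₀ be a minimal prime ideal of T with dim(T/P₀) = n ≥ 3. Then there exist infinitely many prime ideals Q of T such that P₀ ⊆ Q, P₀ is the only minimal prime of T contained in Q, dim(T/Q) = 1, and Q is not contained in any prime P that is an associated prime of T or an associated prime of T/zT for some nonzero regular element z of T. -/
/-- A ring is catenary if for all primes `p ≤ q`, all saturated chains of primes
from `p` to `q` have the same length. -/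
def IsCatenaryRing (T : Type*) [CommRing T] : Prop :=
  ∀ (p q : PrimeSpectrum T) (m n : ℕ)
    (f : Fin (m + 1) → PrimeSpectrum T) (g : Fin (n + 1) → PrimeSpectrum T),
    (∀ i : Fin m, f i.castSucc ⋖ f i.succ) → (∀ i : Fin n, g i.castSucc ⋖ g i.succ) →
    f 0 = p → f (Fin.last m) = q → g 0 = p → g (Fin.last n) = q → m = n

/-- `depth T ≥ 2`: there is a regular sequence of length two in the maximal ideal. -/
def DepthGeTwo (T : Type*) [CommRing T] [IsLocalRing T] : Prop :=
  ∃ a b : T, a ∈ IsLocalRing.maximalIdeal T ∧ b ∈ IsLocalRing.maximalIdeal T ∧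
    RingTheory.Sequence.IsRegular T [a, b]

/-!
A prime `Q` containing a regular element `x` lies in a prime associated to some `T ⧸ (z)` with
`z` regular only if that prime is already associated to `T ⧸ (x)`. If moreover `dim (T ⧸ Q) = 1`,
the only candidates are `Q` itself, which is excluded by avoiding the finitely many associated
primes of `T ⧸ (x)`, and the maximal ideal, which is excluded by `depth T ≥ 2`.

To produce such `Q`, choose `y ∉ P₀` lying in every other minimal prime: a prime above `P₀` not
containing `y` contains no other minimal prime. Prime avoidance and Krull's principal ideal theorem
give a prime `p` covering `P₀` with `y ∉ p` and `dim (T ⧸ p) ≥ 2` which contains a regular element.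
Only finitely many primes covering a prime `r ∌ y` contain `y`, and infinitely many primes cover `r`
as soon as `dim (T ⧸ r) ≥ 2`; for `r ⊇ p` maximal with these two properties, the covers of `r` not
containing `y` are the required primes `Q`, up to finitely many.
-/

open Ideal IsLocalRing
open Order hiding Ideal

lemma exists_gt_natCast_le_coheight {α : Type*} [Preorder α] {a : α} {n : ℕ}
    (h : n + 1 ≤ coheight a) : ∃ b > a, n ≤ coheight b := by
  by_contra! hlt
  have hle : coheight a ≤ n := coheight_le_coe_iff.2 hlt
  have : n + 1 ≤ n := by exact_mod_cast h.trans hle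
  omega

lemma ne_top_of_covBy_of_two_le_coheight {α : Type*} [PartialOrder α] [OrderTop α] {a b : α}
    (ha : 2 ≤ coheight a) (hab : a ⋖ b) : b ≠ ⊤ := by
  rintro rfl
  obtain ⟨c, hac, hc⟩ := exists_gt_natCast_le_coheight (n := 1) (by simpa [one_add_one_eq_two])
  have hc_top : c ≠ ⊤ := by
    rintro rfl
    simp at hc
  exact hab.2 hac hc_top.lt_top

lemma ringKrullDim_quotient_asIdeal {R : Type*} [CommRing R] (p : PrimeSpectrum R) :
    ringKrullDim (R ⧸ p.asIdeal) = coheight p := by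
  rw [ringKrullDim_quotient, coheight_eq_krullDim_Ici]
  rfl

lemma exists_mem_forall_notMem_asIdeal {R : Type*} [CommRing R] {I : Ideal R}
    {F : Set (PrimeSpectrum R)} (hF : F.Finite) (hI : ∀ p ∈ F, ¬ I ≤ p.asIdeal) :
    ∃ x ∈ I, ∀ p ∈ F, x ∉ p.asIdeal := by
  by_contra! hcover
  have hsub : (I : Set R) ⊆ ⋃ p ∈ F, (p.asIdeal : Set R) := fun x hx ↦ by
    simpa using hcover x hx
  obtain ⟨p₀, -, -⟩ := hcover 0 I.zero_mem
  obtain ⟨p, hp, hle⟩ :=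
    (subset_union_prime_finite hF p₀ p₀ fun p _ _ _ ↦ p.isPrime).1 hsub
  exact hI p hp hle

lemma exists_notMem_forall_mem_minimalPrimes {R : Type*} [CommRing R] {I P : Ideal R}
    (hI : I.minimalPrimes.Finite) (hP : P ∈ I.minimalPrimes) :
    ∃ y ∉ P, ∀ Q ∈ I.minimalPrimes, Q ≠ P → y ∈ Q := by
  classical
  have hnot : ¬ (hI.toFinset.erase P).inf id ≤ P := by
    rw [hP.isPrime.inf_le']
    rintro ⟨Q, hQ, hle⟩
    obtain ⟨hne, hQ⟩ := Finset.mem_erase.1 hQ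
    have hQ : Q ∈ I.minimalPrimes := hI.mem_toFinset.1 hQ
    exact hne (hle.antisymm (hP.2 hQ.1 hle))
  obtain ⟨y, hy, hyP⟩ := SetLike.not_le_iff_exists.1 hnot
  refine ⟨y, hyP, fun Q hQ hne ↦ ?_⟩
  exact Finset.inf_le (f := id) (Finset.mem_erase.2 ⟨hne, hI.mem_toFinset.2 hQ⟩) hy

section Noetherian

variable {R : Type*} [CommRing R] [IsNoetherianRing R]

lemma mem_minimalPrimes_sup_span_singleton_iff {p q : PrimeSpectrum R} {x : R}
    (hx : x ∉ p.asIdeal) :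
    q.asIdeal ∈ (p.asIdeal ⊔ span {x}).minimalPrimes ↔ p ⋖ q ∧ x ∈ q.asIdeal := by
  have hle (r : PrimeSpectrum R) : p.asIdeal ⊔ span {x} ≤ r.asIdeal ↔ p ≤ r ∧ x ∈ r.asIdeal := by
    rw [sup_le_iff, span_singleton_le_iff_mem]; rfl
  have hlt {r : PrimeSpectrum R} (hpr : p ≤ r) (hxr : x ∈ r.asIdeal) : p < r :=
    lt_of_le_not_ge hpr fun hrp ↦ hx (hrp hxr)
  constructor
  · intro hq
    obtain ⟨hpq, hxq⟩ := (hle q).1 hq.1.2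
    refine ⟨⟨hlt hpq hxq, fun r hpr hrq ↦ ?_⟩, hxq⟩
    obtain ⟨s, hxs, hps, hsq⟩ := PrimeSpectrum.exist_mem_one_of_mem_two hpr hrq hxq
    exact hsq.not_ge (hq.2 ⟨s.isPrime, (hle s).2 ⟨hps.le, hxs⟩⟩ hsq.le)
  · rintro ⟨hpq, hxq⟩
    refine ⟨⟨q.isPrime, (hle q).2 ⟨hpq.le, hxq⟩⟩, fun r hr hrq ↦ ?_⟩
    obtain ⟨hpr, hxr⟩ := (hle ⟨r, hr.1⟩).1 hr.2
    exact (eq_of_le_of_not_lt hrq (hpq.2 (hlt hpr hxr))).ge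

lemma finite_setOf_covBy_and_mem {p : PrimeSpectrum R} {x : R} (hx : x ∉ p.asIdeal) :
    {q : PrimeSpectrum R | p ⋖ q ∧ x ∈ q.asIdeal}.Finite := by
  simp only [← mem_minimalPrimes_sup_span_singleton_iff hx]
  exact (finite_minimalPrimes_of_isNoetherianRing R _).preimage
    fun _ _ _ _ ↦ PrimeSpectrum.ext

lemma notMem_of_mem_associatedPrimes {M : Type*} [AddCommGroup M] [Module R M] {r : R}
    (hr : IsSMulRegular M r) {p : Ideal R} (hp : p ∈ associatedPrimes R M) : r ∉ p := fun hrp ↦ by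
  have hmem : r ∈ ⋃ p ∈ associatedPrimes R M, (p : Set R) := Set.mem_biUnion hp hrp
  rw [biUnion_associatedPrimes_eq_compl_regular] at hmem
  exact hmem hr

lemma finite_setOf_asIdeal_mem_associatedPrimes (M : Type*) [AddCommGroup M] [Module R M]
    [Module.Finite R M] : {p : PrimeSpectrum R | p.asIdeal ∈ associatedPrimes R M}.Finite :=
  (associatedPrimes.finite R M).preimage fun _ _ _ _ ↦ PrimeSpectrum.ext

lemma mem_associatedPrimes_quotient_span_singleton_iff {z : R} {P : Ideal R} :
    P ∈ associatedPrimes R (R ⧸ span {z}) ↔ P.IsPrime ∧ ∃ t, ∀ q, q ∈ P ↔ z ∣ q * t := by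
  rw [AssociatedPrimes.mem_iff, isAssociatedPrime_iff, Ideal.Quotient.mk_surjective.exists]
  refine and_congr_right fun _ ↦ exists_congr fun t ↦ SetLike.ext_iff.trans ?_
  refine forall_congr' fun q ↦ ?_
  rw [Submodule.mem_colon_singleton, Submodule.mem_bot, Algebra.smul_def,
    Ideal.Quotient.algebraMap_eq, ← map_mul, Ideal.Quotient.eq_zero_iff_mem, mem_span_singleton]

-- If `P = (z : t)` and `x * t = z * u`, then also `P = (x : u)`.
lemma mem_associatedPrimes_quotient_span_singleton_of_mem {z x : R} {P : Ideal R}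
    (hz : z ∈ nonZeroDivisors R) (hx : x ∈ nonZeroDivisors R) (hxP : x ∈ P)
    (hP : P ∈ associatedPrimes R (R ⧸ span {z})) : P ∈ associatedPrimes R (R ⧸ span {x}) := by
  rw [mem_associatedPrimes_quotient_span_singleton_iff] at hP ⊢
  obtain ⟨hprime, t, ht⟩ := hP
  obtain ⟨u, hu⟩ := (ht x).1 hxP
  refine ⟨hprime, u, fun q ↦ (ht q).trans ⟨?_, ?_⟩⟩
  · rintro ⟨s, hs⟩
    exact ⟨s, (mul_cancel_left_mem_nonZeroDivisors hz).1 (by linear_combination (-q) * hu + x * hs)⟩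
  · rintro ⟨s, hs⟩
    exact ⟨s, (mul_cancel_left_mem_nonZeroDivisors hx).1 (by linear_combination q * hu + z * hs)⟩

lemma exists_mem_nonZeroDivisors_of_forall_not_le {I : Ideal R}
    (hI : ∀ P ∈ associatedPrimes R R, ¬ I ≤ P) : ∃ x ∈ I, x ∈ nonZeroDivisors R := by
  by_contra! hI_sub
  have hcover : (I : Set R) ⊆ ⋃ P ∈ associatedPrimes R R, (P : Set R) := by
    rwa [biUnion_associatedPrimes_eq_compl_nonZeroDivisors]
  obtain ⟨P, hP, hle⟩ := (subset_union_prime_finite (associatedPrimes.finite R R) ⊥ ⊥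
    fun P hP _ _ ↦ hP.isPrime).1 hcover
  exact hI P hP hle

end Noetherian

section Local

variable {R : Type*} [CommRing R] [IsNoetherianRing R] [IsLocalRing R]

lemma exists_gt_mem_natCast_le_coheight {x : R} (hx : x ∈ maximalIdeal R) {n : ℕ}
    {p : PrimeSpectrum R} (hp : n + 1 ≤ coheight p) :
    ∃ q > p, x ∈ q.asIdeal ∧ n ≤ coheight q := by
  induction n generalizing p with
  | zero =>
    obtain ⟨q, hpq, -⟩ := exists_gt_natCast_le_coheight hp
    exact ⟨⊤, hpq.trans_le le_top, hx, by simp⟩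
  | succ n ih =>
    obtain ⟨q, hpq, hq⟩ := exists_gt_natCast_le_coheight hp
    obtain ⟨r, hqr, hxr, hr⟩ := ih (by exact_mod_cast hq)
    obtain ⟨s, hxs, hps, hsr⟩ := PrimeSpectrum.exist_mem_one_of_mem_two hpq hqr hxr
    refine ⟨s, hps, hxs, ?_⟩
    rw [Nat.cast_add_one]
    exact (add_le_add_left hr 1).trans (coheight_add_one_le hsr)

lemma exists_covBy_notMem_natCast_le_coheight {p : PrimeSpectrum R} {n : ℕ} (hn : 1 ≤ n)
    (hp : n + 1 ≤ coheight p) {y : R} (hy : y ∉ p.asIdeal) {F : Set (PrimeSpectrum R)}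
    (hF : F.Finite) (hF_top : ⊤ ∉ F) :
    ∃ q, p ⋖ q ∧ y ∉ q.asIdeal ∧ n ≤ coheight q ∧ ∀ r ∈ F, ¬ q ≤ r := by
  let G : Set (PrimeSpectrum R) := F ∪ {p} ∪ {q | p ⋖ q ∧ y ∈ q.asIdeal}
  have hG : G.Finite := (hF.union (Set.finite_singleton p)).union (finite_setOf_covBy_and_mem hy)
  have hp_two : 2 ≤ coheight p := le_trans (by exact_mod_cast Nat.succ_le_succ hn) hp
  have hp_top : p ≠ ⊤ := by
    rintro rfl
    simp at hp_two
  have hG_top : ∀ q ∈ G, ¬ maximalIdeal R ≤ q.asIdeal := by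
    intro q hq hle
    obtain rfl : q = ⊤ := top_unique hle
    rcases hq with (hq | hq) | hq
    · exact hF_top hq
    · exact hp_top hq.symm
    · exact ne_top_of_covBy_of_two_le_coheight hp_two hq.1 rfl
  obtain ⟨w, hw, hwG⟩ := exists_mem_forall_notMem_asIdeal hG hG_top
  obtain ⟨r, hpr, hwr, hr⟩ := exists_gt_mem_natCast_le_coheight hw hp
  obtain ⟨Q, hQ, hQr⟩ := exists_minimalPrimes_le (J := r.asIdeal)
    (sup_le hpr.le ((span_singleton_le_iff_mem _).2 hwr))
  let q : PrimeSpectrum R := ⟨Q, hQ.isPrime⟩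
  have hwp : w ∉ p.asIdeal := hwG p (.inl (.inr rfl))
  obtain ⟨hpq, hwq⟩ := (mem_minimalPrimes_sup_span_singleton_iff (q := q) hwp).1 hQ
  exact ⟨q, hpq, fun hyq ↦ hwG q (.inr ⟨hpq, hyq⟩) hwq, hr.trans (coheight_anti (a := q) hQr),
    fun s hs hqs ↦ hwG s (.inl (.inl hs)) (hqs hwq)⟩

lemma infinite_setOf_covBy_and_notMem {p : PrimeSpectrum R} (hp : 2 ≤ coheight p) {y : R}
    (hy : y ∉ p.asIdeal) : {q : PrimeSpectrum R | p ⋖ q ∧ y ∉ q.asIdeal}.Infinite := by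
  intro hfin
  obtain ⟨q, hpq, hyq, -, hq⟩ := exists_covBy_notMem_natCast_le_coheight le_rfl
    (by simpa [one_add_one_eq_two]) hy hfin
    fun h ↦ ne_top_of_covBy_of_two_le_coheight hp h.1 rfl
  exact hq q ⟨hpq, hyq⟩ le_rfl

lemma infinite_setOf_le_and_notMem_and_coheight_eq_one {p : PrimeSpectrum R}
    (hp : 2 ≤ coheight p) {y : R} (hy : y ∉ p.asIdeal) :
    {q : PrimeSpectrum R | p ≤ q ∧ y ∉ q.asIdeal ∧ coheight q = 1}.Infinite := by
  have : WellFoundedGT (PrimeSpectrum R) :=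
    StrictMono.wellFoundedGT (f := PrimeSpectrum.asIdeal) fun _ _ h ↦ h
  obtain ⟨r, hpr, hr⟩ := exists_maximal_ge_of_wellFoundedGT
    (fun r : PrimeSpectrum R ↦ y ∉ r.asIdeal ∧ 2 ≤ coheight r) p ⟨hy, hp⟩
  refine (infinite_setOf_covBy_and_notMem hr.prop.2 hr.prop.1).mono ?_
  rintro q ⟨hrq, hyq⟩
  refine ⟨hpr.trans hrq.le, hyq, le_antisymm ?_ ?_⟩
  · by_contra! hlt
    exact hr.not_prop_of_gt hrq.lt ⟨hyq, by simpa [one_add_one_eq_two] using add_one_le_of_lt hlt⟩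
  · have hq_top := ne_top_of_covBy_of_two_le_coheight hr.prop.2 hrq
    exact one_le_iff_ne_zero.2 (by simpa using hq_top)

lemma not_le_of_mem_associatedPrimes_quotient {q : PrimeSpectrum R} (hq : coheight q = 1) {x z : R}
    (hx : x ∈ nonZeroDivisors R) (hxq : x ∈ q.asIdeal)
    (hqx : q.asIdeal ∉ associatedPrimes R (R ⧸ span {x})) (hz : z ∈ nonZeroDivisors R)
    (hmz : maximalIdeal R ∉ associatedPrimes R (R ⧸ span {z})) {p : PrimeSpectrum R}
    (hp : p.asIdeal ∈ associatedPrimes R (R ⧸ span {z})) : ¬ q ≤ p := by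
  intro hle
  have hpx := mem_associatedPrimes_quotient_span_singleton_of_mem hz hx (hle hxq) hp
  have hlt : q < p := hle.lt_of_ne fun heq ↦ hqx (heq ▸ hpx)
  have hp_lt_one : coheight p < 1 := (coheight_le_coe_iff (n := 1)).1 hq.le p hlt
  obtain rfl : p = ⊤ := by simpa using hp_lt_one
  exact hmz hp

end Local

namespace DepthGeTwo

open Pointwise

variable {T : Type*} [CommRing T] [IsLocalRing T]

lemma exists_mem_nonZeroDivisors_isSMulRegular (hT : DepthGeTwo T) :
    ∃ a ∈ maximalIdeal T, a ∈ nonZeroDivisors T ∧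
      ∃ b ∈ maximalIdeal T, IsSMulRegular (T ⧸ span {a}) b := by
  obtain ⟨a, b, ha, hb, hab⟩ := hT
  obtain ⟨ha_reg, hb_reg⟩ := (RingTheory.Sequence.isWeaklyRegular_cons_iff T a [b]).1 hab.1
  rw [RingTheory.Sequence.isWeaklyRegular_singleton_iff] at hb_reg
  have htop : a • (⊤ : Submodule T T) = span {a} := by
    rw [← Submodule.ideal_span_singleton_smul, smul_eq_mul, mul_top]
  exact ⟨a, ha, isRegular_iff_mem_nonZeroDivisors.1 (isLeftRegular_iff_isRegular.1 ha_reg), b, hb,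
    ((Submodule.quotEquivOfEq _ _ htop).isSMulRegular_congr b).1 hb_reg⟩

lemma maximalIdeal_notMem_associatedPrimes [IsNoetherianRing T] (hT : DepthGeTwo T) :
    maximalIdeal T ∉ associatedPrimes T T := fun hm ↦ by
  obtain ⟨a, ha, ha_reg, -⟩ := hT.exists_mem_nonZeroDivisors_isSMulRegular
  exact notMem_of_mem_associatedPrimes
    (isLeftRegular_iff.1 (isRegular_iff_mem_nonZeroDivisors.2 ha_reg).left) hm ha

lemma maximalIdeal_notMem_associatedPrimes_quotient [IsNoetherianRing T] (hT : DepthGeTwo T)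
    {z : T} (hz : z ∈ nonZeroDivisors T) :
    maximalIdeal T ∉ associatedPrimes T (T ⧸ span {z}) := fun hmz ↦ by
  obtain ⟨a, ha, ha_reg, b, hb, hb_reg⟩ := hT.exists_mem_nonZeroDivisors_isSMulRegular
  exact notMem_of_mem_associatedPrimes hb_reg
    (mem_associatedPrimes_quotient_span_singleton_of_mem hz ha_reg ha hmz) hb

end DepthGeTwo

theorem statement_2_general (T : Type*) [CommRing T] [IsNoetherianRing T] [IsLocalRing T]
    (hdepth : DepthGeTwo T) (P₀ : Ideal T) (hP₀ : P₀ ∈ minimalPrimes T)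
    (hdim : 3 ≤ ringKrullDim (T ⧸ P₀)) :
    {Q : Ideal T | Q.IsPrime ∧ P₀ ≤ Q ∧
      (∀ P' ∈ minimalPrimes T, P' ≤ Q → P' = P₀) ∧
      ringKrullDim (T ⧸ Q) = 1 ∧
      (∀ P : Ideal T,
        (P ∈ associatedPrimes T T ∨
          ∃ z : T, z ≠ 0 ∧ z ∈ nonZeroDivisors T ∧
            P ∈ associatedPrimes T (T ⧸ Ideal.span {z})) → ¬ Q ≤ P)}.Infinite := by
  let p₀ : PrimeSpectrum T := ⟨P₀, hP₀.isPrime⟩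
  have hp₀ : 3 ≤ coheight p₀ :=
    WithBot.coe_le_coe.1 (hdim.trans_eq (ringKrullDim_quotient_asIdeal p₀))
  obtain ⟨y, hy₀, hy⟩ := exists_notMem_forall_mem_minimalPrimes
    (minimalPrimes.finite_of_isNoetherianRing T) hP₀
  obtain ⟨p, hp₀p, hyp, hp, hpF⟩ := exists_covBy_notMem_natCast_le_coheight (p := p₀) (n := 2)
    one_le_two hp₀ hy₀ (finite_setOf_asIdeal_mem_associatedPrimes T)
    hdepth.maximalIdeal_notMem_associatedPrimes
  have hp_ass : ∀ P ∈ associatedPrimes T T, ¬ p.asIdeal ≤ P := fun P hP ↦ hpF ⟨P, hP.isPrime⟩ hP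
  obtain ⟨x, hxp, hx⟩ := exists_mem_nonZeroDivisors_of_forall_not_le hp_ass
  have hinf := (infinite_setOf_le_and_notMem_and_coheight_eq_one hp hyp).sdiff
    (finite_setOf_asIdeal_mem_associatedPrimes (T ⧸ span {x}))
  refine (hinf.image fun _ _ _ _ ↦ PrimeSpectrum.ext).mono ?_
  rintro _ ⟨q, ⟨⟨hpq, hyq, hq⟩, hqx⟩, rfl⟩
  refine ⟨q.isPrime, hp₀p.le.trans hpq, fun P' hP' hP'q ↦ ?_, ?_, ?_⟩
  · exact of_not_not fun hne ↦ hyq (hP'q (hy P' hP' hne))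
  · rw [ringKrullDim_quotient_asIdeal, hq]; rfl
  · rintro P (hP | ⟨z, -, hz, hP⟩)
    · exact fun hqP ↦ hp_ass P hP (le_trans (b := q.asIdeal) hpq hqP)
    · exact not_le_of_mem_associatedPrimes_quotient hq hx (hpq hxp) hqx hz
        (hdepth.maximalIdeal_notMem_associatedPrimes_quotient hz) (p := ⟨P, hP.isPrime⟩) hP

theorem statement_2 (T : Type*) [CommRing T] [IsNoetherianRing T] [IsLocalRing T]
    (hcat : IsCatenaryRing T) (hdepth : DepthGeTwo T)
    (P₀ : Ideal T) (hP₀ : P₀ ∈ minimalPrimes T) (n : ℕ) (hn : 3 ≤ n)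
    (hdim : ringKrullDim (T ⧸ P₀) = n) :
    {Q : Ideal T | Q.IsPrime ∧ P₀ ≤ Q ∧
      (∀ P' ∈ minimalPrimes T, P' ≤ Q → P' = P₀) ∧
      ringKrullDim (T ⧸ Q) = 1 ∧
      (∀ P : Ideal T,
        (P ∈ associatedPrimes T T ∨
          ∃ z : T, z ≠ 0 ∧ z ∈ nonZeroDivisors T ∧
            P ∈ associatedPrimes T (T ⧸ Ideal.span {z})) → ¬ Q ≤ P)}.Infinite :=
  statement_2_general T hdepth P₀ hP₀ (by rw [hdim]; exact_mod_cast hn)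
end

section
/- Let T = ℚ[[x,y,z,w,t]]/((x) ∩ (y,z)) and let a be a nonzero regular element of T. Suppose the ideal (a, x) has a minimal prime P₁ not containing (y,z), and the ideal (a,y,z) has a minimal prime P₂ not containing (x). Then there exist prime ideals Q₁ and Q₂ of T such that for i = 1, 2: Pᵢ ⊊ Qᵢ, Qᵢ contains exactly one minimal prime ideal of T, and dim(T/Qᵢ) = 1. -/
/-!
Modulo either minimal prime, `T` is a power series ring in at least three variables, so it has depth
at least three, and dividing by the regular element `a` leaves depth at least two (Rees: depth is
detected by the vanishing of `Ext` out of the residue field). The prime `Pᵢ` is associated to this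
quotient, and the depth is at most the dimension of `T ⧸ P` for every associated prime `P`, so
`dim T ⧸ Pᵢ ≥ 2`. Now pick `g ∉ Pᵢ` in the maximal ideal and in the other minimal prime, and let
`Qᵢ` be maximal among the primes above `Pᵢ` that avoid `g`. Every nonzero prime of `T ⧸ Qᵢ` contains
the image of `g`, so by Krull's principal ideal theorem and prime avoidance `dim T ⧸ Qᵢ ≤ 1`.
-/

noncomputable section

/-- The power series ring `ℚ[[x,y,z,w,t]]`. -/
abbrev PS : Type := MvPowerSeries (Fin 5) ℚ

/-- The variables `x, y, z, w, t`. -/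
def V (i : Fin 5) : PS := MvPowerSeries.X i

/-- The ideal `(x) ∩ (y, z)` of `ℚ[[x,y,z,w,t]]`. -/
def K : Ideal PS := Ideal.span {V 0} ⊓ Ideal.span {V 1, V 2}

/-- The ring `T = ℚ[[x,y,z,w,t]]/((x) ∩ (y,z))`. -/
abbrev T : Type := PS ⧸ K

/-- The image of `x` in `T`. -/
def xT : T := Ideal.Quotient.mk K (V 0)
/-- The image of `y` in `T`. -/
def yT : T := Ideal.Quotient.mk K (V 1)
/-- The image of `z` in `T`. -/
def zT : T := Ideal.Quotient.mk K (V 2)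

open RingTheory.Sequence IsLocalRing CategoryTheory Abelian
open scoped Pointwise

section Dimension

theorem ringKrullDim_quotient_add_one_le_of_lt {R : Type*} [CommRing R] {P Q : Ideal R}
    [P.IsPrime] (h : P < Q) : ringKrullDim (R ⧸ Q) + 1 ≤ ringKrullDim (R ⧸ P) := by
  obtain ⟨r, hrQ, hrP⟩ := SetLike.exists_of_lt h
  exact ringKrullDim_succ_le_of_surjective (Ideal.Quotient.factor h.le)
    (Ideal.Quotient.factor_surjective h.le)
    (mem_nonZeroDivisors_of_ne_zero (mt Ideal.Quotient.eq_zero_iff_mem.mp hrP))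
    (by rwa [Ideal.Quotient.factor_mk, Ideal.Quotient.eq_zero_iff_mem])

theorem mem_minimalPrimes_span_singleton_of_height_le_one {R : Type*} [CommRing R] [IsDomain R]
    {f : R} (hf : f ≠ 0) {p : Ideal R} [p.IsPrime] (hfp : f ∈ p) (hp : p.height ≤ 1) :
    p ∈ (Ideal.span {f}).minimalPrimes := by
  obtain ⟨p', hp', hle⟩ :=
    Ideal.exists_minimalPrimes_le ((Ideal.span_singleton_le_iff_mem p).mpr hfp)
  have := hp'.isPrime
  rcases hle.lt_or_eq with hlt | rfl
  · have : p.FiniteHeight := ⟨Or.inr (hp.trans_lt ENat.one_lt_top).ne⟩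
    have height_eq_zero : p'.height = 0 :=
      Order.lt_one_iff.mp ((Ideal.height_strict_mono_of_isPrime_of_isPrime hlt).trans_le hp)
    rw [Ideal.height_eq_zero_iff, IsDomain.minimalPrimes_eq_singleton_bot] at height_eq_zero
    exact absurd ((Ideal.span_singleton_le_iff_mem p').mp hp'.le) (by rwa [height_eq_zero])
  · exact hp'

theorem ringKrullDim_le_one_of_forall_mem {R : Type*} [CommRing R] [IsDomain R]
    [IsNoetherianRing R] {f : R} (hf : f ≠ 0)
    (h : ∀ p : Ideal R, p.IsPrime → p ≠ ⊥ → f ∈ p) : ringKrullDim R ≤ 1 := by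
  refine (ringKrullDim_le_iff_height_le 1).mpr fun q hq => ?_
  rcases eq_or_ne q ⊥ with rfl | hq₀
  · simp
  obtain ⟨p₀, hp₀, -⟩ :=
    Ideal.exists_minimalPrimes_le ((Ideal.span_singleton_le_iff_mem q).mpr (h q hq hq₀))
  have q_subset : (q : Set R) ⊆ ⋃ p ∈ (Ideal.span {f}).minimalPrimes, (p : Set R) := by
    intro g hg
    rcases eq_or_ne g 0 with rfl | hg₀
    · exact Set.mem_biUnion hp₀ p₀.zero_mem
    obtain ⟨p, hp, -⟩ :=
      Ideal.exists_minimalPrimes_le ((Ideal.span_singleton_le_iff_mem q).mpr hg)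
    have hpp := hp.1.1
    have hgp := (Ideal.span_singleton_le_iff_mem p).mp hp.1.2
    have hfp := h p hpp (by rintro rfl; exact hg₀ hgp)
    exact Set.mem_biUnion (mem_minimalPrimes_span_singleton_of_height_le_one hf hfp
      (Ideal.height_le_one_of_isPrincipal_of_mem_minimalPrimes _ p hp)) hgp
  obtain ⟨p, hp, hqp⟩ := (Ideal.subset_union_prime_finite
    (Ideal.span {f}).finite_minimalPrimes_of_isNoetherianRing ⊥ ⊥
    fun p hp _ _ => hp.1.1).mp q_subset
  exact_mod_cast (Ideal.height_mono hqp).trans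
    (Ideal.height_le_one_of_isPrincipal_of_mem_minimalPrimes _ p hp)

theorem ringKrullDim_quotient_le_one_of_forall_lt_mem {R : Type*} [CommRing R]
    [IsNoetherianRing R] {Q : Ideal R} [Q.IsPrime] {g : R} (hg : g ∉ Q)
    (h : ∀ p : Ideal R, p.IsPrime → Q < p → g ∈ p) : ringKrullDim (R ⧸ Q) ≤ 1 := by
  refine ringKrullDim_le_one_of_forall_mem (mt Ideal.Quotient.eq_zero_iff_mem.mp hg) fun p hp hp₀ =>
    Ideal.mem_comap.mp (h _ (hp.comap _) ?_)
  refine (Ideal.mk_ker.ge.trans (Ideal.ker_le_comap _)).lt_of_ne fun hQ => hp₀ ?_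
  rw [← Ideal.map_comap_of_surjective _ Ideal.Quotient.mk_surjective p, ← hQ,
    Ideal.map_quotient_self]

theorem exists_isPrime_lt_and_ringKrullDim_quotient_eq_one {R : Type*} [CommRing R]
    [IsNoetherianRing R] [IsLocalRing R] {P : Ideal R} [hP : P.IsPrime]
    (hdim : 2 ≤ ringKrullDim (R ⧸ P)) {B : Ideal R} (hB : ¬ B ≤ P) :
    ∃ Q : Ideal R, Q.IsPrime ∧ P < Q ∧ ¬ B ≤ Q ∧ ringKrullDim (R ⧸ Q) = 1 := by
  have maximalIdeal_not_le : ¬ maximalIdeal R ≤ P := by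
    intro h
    have : P.IsMaximal :=
      (maximalIdeal.isMaximal R).eq_of_le hP.ne_top h ▸ maximalIdeal.isMaximal R
    let := Ideal.Quotient.field P
    rw [ringKrullDim_eq_zero_of_field] at hdim
    norm_num at hdim
  obtain ⟨g, ⟨hgB, hgm⟩, hgP⟩ := SetLike.not_le_iff_exists.mp
    (mt hP.inf_le.mp (not_or_intro hB maximalIdeal_not_le))
  obtain ⟨(Q : Ideal R), ⟨hQ, hPQ, hgQ⟩, hmax⟩ := set_has_maximal_iff_noetherian.mpr
    ‹IsNoetherianRing R› {Q : Ideal R | Q.IsPrime ∧ P ≤ Q ∧ g ∉ Q} ⟨P, hP, le_rfl, hgP⟩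
  have dim_le : ringKrullDim (R ⧸ Q) ≤ 1 :=
    ringKrullDim_quotient_le_one_of_forall_lt_mem hgQ fun p hp hQp =>
      of_not_not fun hgp => hmax p ⟨hp, hPQ.trans hQp.le, hgp⟩ hQp
  have dim_ge : 1 ≤ ringKrullDim (R ⧸ Q) := by
    have Q_lt : Q < maximalIdeal R :=
      lt_of_le_of_ne (le_maximalIdeal hQ.ne_top) fun h => hgQ (h ▸ hgm)
    refine le_trans ?_ (ringKrullDim_quotient_add_one_le_of_lt Q_lt)
    exact le_add_of_nonneg_left ringKrullDim_nonneg_of_nontrivial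
  refine ⟨Q, hQ, lt_of_le_of_ne hPQ ?_, fun h => hgQ (h hgB), le_antisymm dim_le dim_ge⟩
  rintro rfl
  exact absurd (hdim.trans dim_le) (by norm_num)

end Dimension

section Depth

/-- The `R`-module `M` has depth at least `n`: there is a weakly regular sequence of length at
least `n` in the maximal ideal. Weak regularity does not ask for `M ≠ 0`, so the zero module
satisfies this for every `n`, in line with the convention that its depth is `∞`. -/
def HasDepthGE (R M : Type*) [CommRing R] [IsLocalRing R] [AddCommGroup M] [Module R M]
    (n : ℕ) : Prop :=
  ∃ rs : List R, n ≤ rs.length ∧ (∀ r ∈ rs, r ∈ maximalIdeal R) ∧ IsWeaklyRegular M rs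

section

variable {R M : Type*} [CommRing R] [AddCommGroup M] [Module R M] [Module.Finite R M]

theorem maximalIdeal_smul_top_lt_top [IsLocalRing R] [Nontrivial M] :
    maximalIdeal R • (⊤ : Submodule R M) < ⊤ :=
  (Submodule.top_ne_ideal_smul_of_le_jacobson_annihilator
    (maximalIdeal_le_jacobson _)).symm.lt_top

variable [IsNoetherianRing R]

theorem mem_associatedPrimes_quotSMulTop {a : R} {P : Ideal R}
    (hP : P ∈ (Ideal.span {a} ⊔ Module.annihilator R M).minimalPrimes) :
    P ∈ associatedPrimes R (QuotSMulTop a M) := by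
  apply Module.associatedPrimes.minimalPrimes_annihilator_subset_associatedPrimes
  have radical_eq : (Ideal.span {a} ⊔ Module.annihilator R M).radical =
      (Module.annihilator R (QuotSMulTop a M)).radical := by
    rw [← PrimeSpectrum.zeroLocus_eq_iff, ← Module.support_eq_zeroLocus,
      Module.support_quotSMulTop, Module.support_eq_zeroLocus, PrimeSpectrum.zeroLocus_sup,
      PrimeSpectrum.zeroLocus_span, Set.inter_comm]
  rwa [← Ideal.radical_minimalPrimes, ← radical_eq, Ideal.radical_minimalPrimes]

variable [IsLocalRing R]

theorem exists_notMem_smul_top_of_mem_associatedPrimes {x : R} (hx : x ∈ maximalIdeal R)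
    (hxM : IsSMulRegular M x) {P : Ideal R} (hP : P ∈ associatedPrimes R M) :
    ∃ n : M, n ∉ x • (⊤ : Submodule R M) ∧ ∀ p ∈ P, p • n = 0 := by
  obtain ⟨hPp, m, hm⟩ := isAssociatedPrime_iff.mp hP
  let N : Submodule R M := Submodule.torsionBySet R M P
  have mem_N {n : M} : n ∈ N ↔ ∀ p ∈ P, p • n = 0 := by
    simp only [N, Submodule.mem_torsionBySet_iff, Subtype.forall, SetLike.mem_coe]
  have N_ne_bot : N ≠ ⊥ := by
    intro hN
    have hmN : m ∈ N := mem_N.mpr fun p hp => by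
      rwa [hm, Submodule.mem_colon_singleton, Submodule.mem_bot] at hp
    rw [hN, Submodule.mem_bot] at hmN
    exact hPp.ne_top (by simp [hm, hmN])
  have not_N_le : ¬ N ≤ x • (⊤ : Submodule R M) := by
    intro hN
    -- As `x` is `M`-regular, `N ∩ xM = xN`, so `N ≤ xM` would contradict Nakayama's lemma.
    have hNx : N ≤ Ideal.span {x} • N := by
      intro n hn
      obtain ⟨n', -, rfl⟩ := hN hn
      refine Submodule.smul_mem_smul (Ideal.mem_span_singleton_self x) (mem_N.mpr fun p hp => ?_)
      exact hxM.right_eq_zero_of_smul (by rw [smul_comm]; exact mem_N.mp hn p hp)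
    refine N_ne_bot (le_bot_iff.mp (Submodule.le_of_le_smul_of_le_jacobson_bot
      (IsNoetherian.noetherian N) ?_ (hNx.trans le_sup_right)))
    rwa [jacobson_eq_maximalIdeal ⊥ bot_ne_top, Ideal.span_singleton_le_iff_mem]
  obtain ⟨n, hn, hnx⟩ := SetLike.not_le_iff_exists.mp not_N_le
  exact ⟨n, hnx, mem_N.mp hn⟩

theorem exists_mem_associatedPrimes_quotSMulTop {x : R} (hx : x ∈ maximalIdeal R)
    (hxM : IsSMulRegular M x) {P : Ideal R} (hP : P ∈ associatedPrimes R M) :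
    ∃ Q ∈ associatedPrimes R (QuotSMulTop x M), P ⊔ Ideal.span {x} ≤ Q := by
  obtain ⟨n, hnx, hPn⟩ := exists_notMem_smul_top_of_mem_associatedPrimes hx hxM hP
  obtain ⟨Q, hQ, hnQ⟩ := exists_le_isAssociatedPrime_of_isNoetherianRing R
    (Submodule.Quotient.mk n : QuotSMulTop x M) (mt (Submodule.Quotient.mk_eq_zero _).mp hnx)
  refine ⟨Q, hQ, le_trans (sup_le (fun p hp => ?_) ?_) hnQ⟩
  · rw [Submodule.mem_colon_singleton, Submodule.mem_bot, ← Submodule.Quotient.mk_smul,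
      hPn p hp, Submodule.Quotient.mk_zero]
  · rw [Ideal.span_singleton_le_iff_mem, Submodule.mem_colon_singleton, Submodule.mem_bot,
      ← Submodule.Quotient.mk_smul, Submodule.Quotient.mk_eq_zero]
    exact Submodule.smul_mem_pointwise_smul n x ⊤ trivial

theorem length_le_ringKrullDim_of_mem_associatedPrimes {rs : List R}
    (hrs : IsWeaklyRegular M rs) (hmem : ∀ r ∈ rs, r ∈ maximalIdeal R)
    {P : Ideal R} (hP : P ∈ associatedPrimes R M) :
    (rs.length : WithBot ℕ∞) ≤ ringKrullDim (R ⧸ P) := by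
  induction rs generalizing M P with
  | nil =>
    have := hP.isPrime
    exact ringKrullDim_nonneg_of_nontrivial
  | cons x rs ih =>
    have := hP.isPrime
    obtain ⟨hx, hrs⟩ := (isWeaklyRegular_cons_iff M x rs).mp hrs
    obtain ⟨hxm, hmem⟩ := List.forall_mem_cons.mp hmem
    obtain ⟨Q, hQ, hPQ⟩ := exists_mem_associatedPrimes_quotSMulTop hxm hx hP
    have x_notMem : x ∉ P := fun hxP =>
      (biUnion_associatedPrimes_eq_compl_regular R M).subset (Set.mem_biUnion hP hxP) hx
    have P_lt_Q : P < Q := lt_of_le_of_ne (le_sup_left.trans hPQ) fun h =>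
      x_notMem (h ▸ hPQ (Ideal.mem_sup_right (Ideal.mem_span_singleton_self x)))
    calc ((x :: rs).length : WithBot ℕ∞) = rs.length + 1 := by
          rw [List.length_cons, Nat.cast_add, Nat.cast_one]
      _ ≤ ringKrullDim (R ⧸ Q) + 1 := by gcongr; exact ih hrs hmem hQ
      _ ≤ ringKrullDim (R ⧸ P) := ringKrullDim_quotient_add_one_le_of_lt P_lt_Q

end

universe u

theorem subsingleton_ext_quotSMulTop {R : Type u} [CommRing R] {M N : ModuleCat.{u} R} {x : R}
    (hx : IsSMulRegular M x) {n : ℕ} (h₀ : Subsingleton (Ext N M n))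
    (h₁ : Subsingleton (Ext N M (n + 1))) :
    Subsingleton (Ext N (ModuleCat.of R (QuotSMulTop x M)) n) :=
  AddCommGrpCat.subsingleton_of_isZero <| ShortComplex.Exact.isZero_of_both_zeros
    (Ext.covariant_sequence_exact₃' N hx.smulShortComplex_shortExact n (n + 1) rfl)
    ((AddCommGrpCat.isZero_of_iff_subsingleton.mpr h₀).eq_zero_of_src _)
    ((AddCommGrpCat.isZero_of_iff_subsingleton.mpr h₁).eq_zero_of_tgt _)

variable {R M : Type u} [CommRing R] [IsNoetherianRing R] [IsLocalRing R]
  [AddCommGroup M] [Module R M] [Module.Finite R M] {a : R} {n : ℕ}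

theorem HasDepthGE.quotSMulTop [Nontrivial M] (hM : HasDepthGE R M (n + 1))
    (ha : a ∈ maximalIdeal R) (haM : IsSMulRegular M a) :
    HasDepthGE R (QuotSMulTop a M) n := by
  obtain ⟨rs, hlen, hmem, hrs⟩ := hM
  have support_k : Module.support R (ModuleCat.of R (R ⧸ maximalIdeal R)) =
      PrimeSpectrum.zeroLocus (maximalIdeal R) := by
    rw [Module.support_eq_zeroLocus, Ideal.annihilator_quotient]
  have ext_M : ∀ i < rs.length,
      Subsingleton (Ext (ModuleCat.of R (R ⧸ maximalIdeal R)) (ModuleCat.of R M) i) :=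
    ModuleCat.subsingleton_ext_of_exists_isRegular (maximalIdeal R) _ support_k.subset
      (ModuleCat.of R M) maximalIdeal_smul_top_lt_top rs hmem
      ((isRegular_iff_isWeaklyRegular_of_subset_maximalIdeal hmem).mpr hrs)
  have := nontrivial_quotSMulTop_of_mem_maximalIdeal M ha
  obtain ⟨rs', hlen', hmem', hrs'⟩ := ModuleCat.exists_isRegular_of_exists_subsingleton_ext
    (maximalIdeal R) n (ModuleCat.of R (QuotSMulTop a M))
    maximalIdeal_smul_top_lt_top _ support_k fun i hi =>
      subsingleton_ext_quotSMulTop (M := ModuleCat.of R M) haM (ext_M i (by omega))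
        (ext_M (i + 1) (by omega))
  exact ⟨rs', hlen'.ge, hmem', hrs'.toIsWeaklyRegular⟩

theorem HasDepthGE.le_ringKrullDim_quotient_of_mem_minimalPrimes
    (hM : HasDepthGE R M (n + 1)) (haM : IsSMulRegular M a) {P : Ideal R}
    (hP : P ∈ (Ideal.span {a} ⊔ Module.annihilator R M).minimalPrimes) :
    (n : WithBot ℕ∞) ≤ ringKrullDim (R ⧸ P) := by
  have ha : a ∈ maximalIdeal R := le_maximalIdeal hP.1.1.ne_top
    (hP.1.2 (Ideal.mem_sup_left (Ideal.mem_span_singleton_self a)))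
  have hPass := mem_associatedPrimes_quotSMulTop hP
  have : Nontrivial (QuotSMulTop a M) := not_subsingleton_iff_nontrivial.mp fun _ => by
    simp only [associatedPrimes.eq_empty_of_subsingleton, Set.mem_empty_iff_false] at hPass
  have : Nontrivial M := (Submodule.mkQ_surjective (a • (⊤ : Submodule R M))).nontrivial
  obtain ⟨rs, hlen, hmem, hrs⟩ := hM.quotSMulTop ha haM
  exact (Nat.cast_le.mpr hlen).trans
    (length_le_ringKrullDim_of_mem_associatedPrimes hrs hmem hPass)

end Depth

section TwoMinimalPrimes

section

variable {R : Type*} [CommRing R] {I J : Ideal R}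

theorem existsUnique_minimalPrimes_le (hI : I.IsPrime) (hIJ : I ⊓ J = ⊥) {Q : Ideal R}
    (hIQ : I ≤ Q) (hJQ : ¬ J ≤ Q) : ∃! p : Ideal R, p ∈ minimalPrimes R ∧ p ≤ Q := by
  have I_le {p : Ideal R} (hp : p.IsPrime) (hpQ : p ≤ Q) : I ≤ p :=
    (hp.inf_le.mp (hIJ.trans_le bot_le)).resolve_right fun hJp => hJQ (hJp.trans hpQ)
  refine ⟨I, ⟨⟨⟨hI, bot_le⟩, fun p hp hpI => I_le hp.1 (hpI.trans hIQ)⟩, hIQ⟩, ?_⟩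
  rintro p ⟨hp, hpQ⟩
  have I_le_p := I_le hp.isPrime hpQ
  exact le_antisymm (hp.2 ⟨hI, bot_le⟩ I_le_p) I_le_p

theorem notMem_of_mem_nonZeroDivisors (hIJ : I ⊓ J = ⊥) (hJ : J ≠ ⊥) {a : R}
    (ha : a ∈ nonZeroDivisors R) : a ∉ I := by
  intro haI
  obtain ⟨b, hbJ, hb₀⟩ := Submodule.exists_mem_ne_zero_of_ne_bot hJ
  have hab : a * b ∈ I ⊓ J := ⟨I.mul_mem_right b haI, J.mul_mem_left a hbJ⟩
  rw [hIJ, Ideal.mem_bot] at hab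
  exact hb₀ ((mul_left_mem_nonZeroDivisors_eq_zero_iff ha).mp hab)

theorem isSMulRegular_quotient_of_notMem [hI : I.IsPrime] {r : R} (hr : r ∉ I) :
    IsSMulRegular (R ⧸ I) r :=
  (isSMulRegular_quotient_iff_mem_of_smul_mem I r).mpr fun _ hx =>
    (hI.mem_or_mem hx).resolve_left hr

end

variable {R : Type*} [CommRing R] [IsNoetherianRing R] [IsLocalRing R] {I J : Ideal R}

theorem exists_isPrime_lt_and_existsUnique_minimalPrimes_le [hI : I.IsPrime] (hIJ : I ⊓ J = ⊥)
    (hdepth : HasDepthGE R (R ⧸ I) 3) {a : R} (ha : a ∈ nonZeroDivisors R)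
    {P : Ideal R} (hP : P ∈ (Ideal.span {a} ⊔ I).minimalPrimes) (hJP : ¬ J ≤ P) :
    ∃ Q : Ideal R, Q.IsPrime ∧ P < Q ∧ (∃! p : Ideal R, p ∈ minimalPrimes R ∧ p ≤ Q) ∧
      ringKrullDim (R ⧸ Q) = 1 := by
  have := hP.1.1
  have ha_reg : IsSMulRegular (R ⧸ I) a := isSMulRegular_quotient_of_notMem
    (notMem_of_mem_nonZeroDivisors hIJ (fun hJ => hJP (hJ.trans_le bot_le)) ha)
  have two_le : 2 ≤ ringKrullDim (R ⧸ P) :=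
    hdepth.le_ringKrullDim_quotient_of_mem_minimalPrimes ha_reg
      (by rwa [Ideal.annihilator_quotient])
  obtain ⟨Q, hQ, hPQ, hJQ, hdim⟩ := exists_isPrime_lt_and_ringKrullDim_quotient_eq_one two_le hJP
  exact ⟨Q, hQ, hPQ, existsUnique_minimalPrimes_le hI hIJ
    ((le_sup_right.trans hP.1.2).trans hPQ.le) hJQ, hdim⟩

theorem statement_5_general [I.IsPrime] [J.IsPrime] (hIJ : I ⊓ J = ⊥)
    (hI : HasDepthGE R (R ⧸ I) 3) (hJ : HasDepthGE R (R ⧸ J) 3)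
    {a : R} (ha : a ∈ nonZeroDivisors R)
    {P₁ : Ideal R} (hP₁ : P₁ ∈ (Ideal.span {a} ⊔ I).minimalPrimes) (hJP₁ : ¬ J ≤ P₁)
    {P₂ : Ideal R} (hP₂ : P₂ ∈ (Ideal.span {a} ⊔ J).minimalPrimes) (hIP₂ : ¬ I ≤ P₂) :
    ∃ Q₁ Q₂ : Ideal R, Q₁.IsPrime ∧ Q₂.IsPrime ∧
      P₁ < Q₁ ∧ P₂ < Q₂ ∧
      (∃! p : Ideal R, p ∈ minimalPrimes R ∧ p ≤ Q₁) ∧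
      (∃! p : Ideal R, p ∈ minimalPrimes R ∧ p ≤ Q₂) ∧
      ringKrullDim (R ⧸ Q₁) = 1 ∧ ringKrullDim (R ⧸ Q₂) = 1 := by
  obtain ⟨Q₁, hQ₁, hPQ₁, hmin₁, hdim₁⟩ :=
    exists_isPrime_lt_and_existsUnique_minimalPrimes_le hIJ hI ha hP₁ hJP₁
  obtain ⟨Q₂, hQ₂, hPQ₂, hmin₂, hdim₂⟩ :=
    exists_isPrime_lt_and_existsUnique_minimalPrimes_le (inf_comm I J ▸ hIJ) hJ ha hP₂ hIP₂
  exact ⟨Q₁, Q₂, hQ₁, hQ₂, hPQ₁, hPQ₂, hmin₁, hmin₂, hdim₁, hdim₂⟩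

end TwoMinimalPrimes

section QuotientRing

variable {R : Type*} [CommRing R]

theorem isWeaklyRegular_quotient_map_mk_iff {I J : Ideal R} (h : I ≤ J) {rs : List R} :
    IsWeaklyRegular ((R ⧸ I) ⧸ J.map (Ideal.Quotient.mk I)) (rs.map (Ideal.Quotient.mk I)) ↔
      IsWeaklyRegular (R ⧸ J) rs := by
  rw [← Ideal.Quotient.algebraMap_eq, isWeaklyRegular_map_algebraMap_iff]
  exact (DoubleQuot.quotQuotEquivQuotOfLEₐ R h).toLinearEquiv.isWeaklyRegular_congr rs

theorem map_mk_inf_map_mk_eq_bot {I J L : Ideal R} (hL : L = I ⊓ J) :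
    I.map (Ideal.Quotient.mk L) ⊓ J.map (Ideal.Quotient.mk L) = ⊥ := by
  refine Ideal.comap_injective_of_surjective _ Ideal.Quotient.mk_surjective ?_
  rw [Ideal.comap_inf, Ideal.comap_map_quotientMk, Ideal.comap_map_quotientMk,
    ← RingHom.ker_eq_comap_bot, Ideal.mk_ker, sup_eq_right.mpr (hL.trans_le inf_le_left),
    sup_eq_right.mpr (hL.trans_le inf_le_right), hL]

theorem mk_mem_maximalIdeal [IsLocalRing R] (I : Ideal R) [IsLocalRing (R ⧸ I)] {r : R}
    (hr : r ∈ maximalIdeal R) : Ideal.Quotient.mk I r ∈ maximalIdeal (R ⧸ I) :=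
  have := IsLocalHom.of_surjective (Ideal.Quotient.mk I) Ideal.Quotient.mk_surjective
  map_mem_nonunits_iff (Ideal.Quotient.mk I) r |>.mpr hr

theorem HasDepthGE.quotient_map_mk [IsLocalRing R] {I J : Ideal R} [IsLocalRing (R ⧸ I)] {n : ℕ}
    (hJ : HasDepthGE R (R ⧸ J) n) (h : I ≤ J) :
    HasDepthGE (R ⧸ I) ((R ⧸ I) ⧸ J.map (Ideal.Quotient.mk I)) n := by
  obtain ⟨rs, hlen, hmem, hrs⟩ := hJ
  exact ⟨rs.map (Ideal.Quotient.mk I), by rwa [List.length_map],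
    List.forall_mem_map.mpr fun r hr => mk_mem_maximalIdeal I (hmem r hr),
    (isWeaklyRegular_quotient_map_mk_iff h).mpr hrs⟩

theorem smul_top_quotient_eq_map_mkQ (I : Ideal R) (r : R) :
    r • (⊤ : Submodule R (R ⧸ I)) = Submodule.map (Submodule.mkQ I) (Ideal.span {r}) := by
  rw [← I.range_mkQ, ← Submodule.map_top, ← Submodule.map_pointwise_smul,
    ← Submodule.ideal_span_singleton_smul, Ideal.smul_eq_mul, Ideal.mul_top]

theorem isWeaklyRegular_quotient_cons_iff {I : Ideal R} {r : R} {rs : List R} :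
    IsWeaklyRegular (R ⧸ I) (r :: rs) ↔
      IsSMulRegular (R ⧸ I) r ∧ IsWeaklyRegular (R ⧸ (I ⊔ Ideal.span {r})) rs := by
  rw [isWeaklyRegular_cons_iff]
  exact and_congr_right' ((Submodule.quotEquivOfEq _ _ (smul_top_quotient_eq_map_mkQ I r) ≪≫ₗ
      Submodule.quotientQuotientEquivQuotientSup I (Ideal.span {r})).isWeaklyRegular_congr rs)

end QuotientRing

section PowerSeries

open MvPowerSeries

variable {σ R : Type*} [CommRing R]

theorem killCompl_subtype_eq_zero_iff {p : σ → Prop} {f : MvPowerSeries σ R} :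
    killCompl (Function.Embedding.subtype p) f = 0 ↔
      ∀ m : σ →₀ ℕ, (∀ i, ¬ p i → m i = 0) → coeff m f = 0 := by
  classical
  constructor
  · intro hf m hm
    have embDomain_eq :
        Finsupp.embDomain (Function.Embedding.subtype p) (m.subtypeDomain p) = m := by
      rw [← Finsupp.extendDomain_eq_embDomain_subtype, Finsupp.extendDomain_subtypeDomain]
      exact fun i hi => of_not_not fun hpi => Finsupp.mem_support_iff.mp hi (hm i hpi)
    rw [← embDomain_eq, ← coeff_killCompl, hf, map_zero]
  · intro hf
    ext x
    rw [coeff_killCompl, map_zero]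
    exact hf _ fun i hi => Finsupp.embDomain_of_notMem_range _ _ _ (by simpa using hi)

theorem mem_span_X_image_of_coeff_eq_zero {s : Finset σ} {f : MvPowerSeries σ R}
    (hf : ∀ m : σ →₀ ℕ, (∀ i ∈ s, m i = 0) → coeff m f = 0) :
    f ∈ Ideal.span (X '' (s : Set σ)) := by
  induction s using Finset.cons_induction generalizing f with
  | empty =>
    have : f = 0 := by ext m; exact hf m (by simp)
    exact this ▸ zero_mem _
  | cons k s hk ih =>
    let g : MvPowerSeries σ R := fun m => if m k = 0 then coeff m f else 0
    have coeff_g (m : σ →₀ ℕ) : coeff m g = if m k = 0 then coeff m f else 0 := rfl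
    have hg : g ∈ Ideal.span (X '' (s : Set σ)) := ih fun m hm => by
      rw [coeff_g]
      split_ifs with hmk
      · exact hf m ((Finset.forall_mem_cons hk _).mpr ⟨hmk, hm⟩)
      · rfl
    have hfg : f - g ∈ Ideal.span {X k} := by
      rw [Ideal.mem_span_singleton, X_dvd_iff]
      intro m hm
      rw [map_sub, coeff_g, if_pos hm, sub_self]
    rw [Finset.coe_cons, Set.image_insert_eq, Ideal.span_insert, ← sub_add_cancel f g]
    exact Submodule.add_mem_sup hfg hg

theorem span_X_image_eq_ker_killCompl (s : Finset σ) :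
    Ideal.span (X '' (s : Set σ)) =
      RingHom.ker (killCompl (R := R) (Function.Embedding.subtype (· ∉ s))) := by
  apply le_antisymm
  · rw [Ideal.span_le, Set.image_subset_iff]
    exact fun i hi => killCompl_X_eq_zero (by simpa using hi)
  · exact fun f hf => mem_span_X_image_of_coeff_eq_zero fun m hm =>
      killCompl_subtype_eq_zero_iff.mp hf m (by simpa using hm)

theorem mem_span_X_image_iff {s : Finset σ} {f : MvPowerSeries σ R} :
    f ∈ Ideal.span (X '' (s : Set σ)) ↔
      ∀ m : σ →₀ ℕ, (∀ i ∈ s, m i = 0) → coeff m f = 0 := by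
  rw [span_X_image_eq_ker_killCompl, RingHom.mem_ker]
  simpa only [not_not] using killCompl_subtype_eq_zero_iff (p := (· ∉ s))

instance isPrime_span_X_image [IsDomain R] (s : Finset σ) :
    (Ideal.span (X '' (s : Set σ)) : Ideal (MvPowerSeries σ R)).IsPrime := by
  have : IsDomain (MvPowerSeries {i // i ∉ s} R) := NoZeroDivisors.to_isDomain _
  rw [span_X_image_eq_ker_killCompl]
  exact RingHom.ker_isPrime _

theorem isSMulRegular_X_quotient_span_X_image {s : Finset σ} {k : σ} (hk : k ∉ s) :
    IsSMulRegular (MvPowerSeries σ R ⧸ Ideal.span (X '' (s : Set σ) : Set (MvPowerSeries σ R)))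
      (X k : MvPowerSeries σ R) := by
  rw [isSMulRegular_quotient_iff_mem_of_smul_mem]
  intro f hf
  rw [mem_span_X_image_iff] at hf ⊢
  intro m hm
  have coeff_X_mul : coeff (Finsupp.single k 1 + m) (X k * f) = coeff m f := by
    rw [X, coeff_add_monomial_mul, one_mul]
  rw [← coeff_X_mul]
  refine hf _ fun i hi => ?_
  rw [Finsupp.add_apply, hm i hi, Finsupp.single_eq_of_ne (ne_of_mem_of_not_mem hi hk)]

theorem isWeaklyRegular_map_X_quotient_span_X_image {s : Finset σ} {l : List σ} (hl : l.Nodup)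
    (hls : ∀ k ∈ l, k ∉ s) :
    IsWeaklyRegular (MvPowerSeries σ R ⧸ Ideal.span (X '' (s : Set σ) : Set (MvPowerSeries σ R)))
      (l.map (X : σ → MvPowerSeries σ R)) := by
  induction l generalizing s with
  | nil => exact IsWeaklyRegular.nil _ _
  | cons k l ih =>
    obtain ⟨hkl, hl⟩ := List.nodup_cons.mp hl
    obtain ⟨hks, hls⟩ := List.forall_mem_cons.mp hls
    have hls' : ∀ j ∈ l, j ∉ Finset.cons k s hks := fun j hj => by
      rw [Finset.mem_cons, not_or]
      exact ⟨fun h => hkl (h ▸ hj), hls j hj⟩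
    have ih' := ih hl hls'
    rw [Finset.coe_cons, Set.image_insert_eq, Ideal.span_insert, sup_comm] at ih'
    exact isWeaklyRegular_quotient_cons_iff.mpr ⟨isSMulRegular_X_quotient_span_X_image hks, ih'⟩

variable [IsLocalRing R]

theorem X_mem_maximalIdeal (i : σ) :
    (X i : MvPowerSeries σ R) ∈ maximalIdeal (MvPowerSeries σ R) := by
  rw [mem_maximalIdeal, mem_nonunits_iff, isUnit_iff_constantCoeff, constantCoeff_X]
  exact not_isUnit_zero

theorem hasDepthGE_quotient_span_X_image [Fintype σ] [DecidableEq σ] {s : Finset σ} {n : ℕ}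
    (hn : n ≤ sᶜ.card) :
    HasDepthGE (MvPowerSeries σ R)
      (MvPowerSeries σ R ⧸ Ideal.span (X '' (s : Set σ) : Set (MvPowerSeries σ R)))
      n := by
  refine ⟨sᶜ.toList.map X, by rwa [List.length_map, Finset.length_toList], ?_,
    isWeaklyRegular_map_X_quotient_span_X_image sᶜ.nodup_toList fun k hk =>
      Finset.mem_compl.mp (Finset.mem_toList.mp hk)⟩
  exact List.forall_mem_map.mpr fun i _ => X_mem_maximalIdeal i

end PowerSeries

section FiberProduct

/-- The ideal of `T` generated by the variables with index in `s`; the minimal primes `(x)` and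
`(y, z)` of `T` are `varIdeal {0}` and `varIdeal {1, 2}`. -/
def varIdeal (s : Finset (Fin 5)) : Ideal T :=
  (Ideal.span (MvPowerSeries.X '' (s : Set (Fin 5)))).map (Ideal.Quotient.mk K)

theorem varIdeal_zero : varIdeal {0} = Ideal.span {xT} := by
  simp [varIdeal, Ideal.map_span, xT, V]

theorem varIdeal_one_two : varIdeal {1, 2} = Ideal.span {yT, zT} := by
  simp [varIdeal, Ideal.map_span, Set.image_pair, yT, zT, V]

theorem K_eq_inf : K =
    Ideal.span (MvPowerSeries.X '' (({0} : Finset (Fin 5)) : Set (Fin 5))) ⊓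
      Ideal.span (MvPowerSeries.X '' (({1, 2} : Finset (Fin 5)) : Set (Fin 5))) := by
  simp [K, V, Set.image_pair]

theorem span_xT_inf_span_yT_zT : Ideal.span {xT} ⊓ Ideal.span {yT, zT} = ⊥ := by
  rw [← varIdeal_zero, ← varIdeal_one_two]
  exact map_mk_inf_map_mk_eq_bot K_eq_inf

theorem isPrime_varIdeal {s : Finset (Fin 5)}
    (hs : K ≤ Ideal.span (MvPowerSeries.X '' (s : Set (Fin 5)))) : (varIdeal s).IsPrime :=
  Ideal.map_isPrime_of_surjective Ideal.Quotient.mk_surjective (Ideal.mk_ker.trans_le hs)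

instance isPrime_span_xT : (Ideal.span {xT}).IsPrime :=
  varIdeal_zero ▸ isPrime_varIdeal (K_eq_inf.trans_le inf_le_left)

instance isPrime_span_yT_zT : (Ideal.span {yT, zT}).IsPrime :=
  varIdeal_one_two ▸ isPrime_varIdeal (K_eq_inf.trans_le inf_le_right)

instance isLocalRing_T : IsLocalRing T :=
  have : Nontrivial T := (Ideal.Quotient.mk (Ideal.span {xT})).domain_nontrivial
  IsLocalRing.of_surjective' (Ideal.Quotient.mk K) Ideal.Quotient.mk_surjective

theorem hasDepthGE_quotient_varIdeal {s : Finset (Fin 5)} {n : ℕ}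
    (hs : K ≤ Ideal.span (MvPowerSeries.X '' (s : Set (Fin 5)))) (hn : n ≤ sᶜ.card) :
    HasDepthGE T (T ⧸ varIdeal s) n :=
  HasDepthGE.quotient_map_mk (hasDepthGE_quotient_span_X_image hn) hs

theorem hasDepthGE_quotient_span_xT : HasDepthGE T (T ⧸ Ideal.span {xT}) 3 :=
  varIdeal_zero ▸ hasDepthGE_quotient_varIdeal (K_eq_inf.trans_le inf_le_left) (by decide)

theorem hasDepthGE_quotient_span_yT_zT : HasDepthGE T (T ⧸ Ideal.span {yT, zT}) 3 :=
  varIdeal_one_two ▸ hasDepthGE_quotient_varIdeal (K_eq_inf.trans_le inf_le_right) (by decide)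

end FiberProduct

/-- Lemma `findgoodQ`. -/
theorem statement_5 (a : T) (ha0 : a ≠ 0) (hareg : a ∈ nonZeroDivisors T)
    (P₁ : Ideal T) (hP₁ : P₁ ∈ (Ideal.span {a, xT}).minimalPrimes)
    (hP₁yz : ¬ Ideal.span {yT, zT} ≤ P₁)
    (P₂ : Ideal T) (hP₂ : P₂ ∈ (Ideal.span {a, yT, zT}).minimalPrimes)
    (hP₂x : ¬ Ideal.span {xT} ≤ P₂) :
    ∃ Q₁ Q₂ : Ideal T, Q₁.IsPrime ∧ Q₂.IsPrime ∧
      P₁ < Q₁ ∧ P₂ < Q₂ ∧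
      (∃! p : Ideal T, p ∈ minimalPrimes T ∧ p ≤ Q₁) ∧
      (∃! p : Ideal T, p ∈ minimalPrimes T ∧ p ≤ Q₂) ∧
      ringKrullDim (T ⧸ Q₁) = 1 ∧ ringKrullDim (T ⧸ Q₂) = 1 := by
  rw [Ideal.span_insert] at hP₁ hP₂
  exact statement_5_general span_xT_inf_span_yT_zT hasDepthGE_quotient_span_xT
    hasDepthGE_quotient_span_yT_zT hareg hP₁ hP₁yz hP₂ hP₂x

end
end

section
/- Let (R, R ∩ M) be a quasi-local subring of a complete Noetherian local ring (T, M) such that the composite map R → T → T/M² is surjective and IT ∩ R = I for every finitely generated ideal I of R. Then R is Noetherian and the natural homomorphism from the (R ∩ M)-adic completion of R to T is an isomorphism. -/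
/-!
Since finitely generated ideals of `R` are contracted from `T`, an ideal of `R` is finitely
generated as soon as its extension is. For the contraction `m` of `M`, surjectivity of `R → T/M²`
gives `M = mT + M²`, hence `M = mT` by Nakayama's lemma. So `m` is finitely generated, and the
contraction hypothesis for its powers reads `Mⁿ ∩ R = mⁿ`, which makes the map from the completion
of `R` to `T` injective. This map is surjective because it is surjective modulo `mT` and the
completion of `R`, `m` being finitely generated, is `m`-adically complete.
-/

open Function

section Extension

variable {R S : Type*} [CommRing R] [CommRing S]

lemma exists_fg_le_map_eq_of_fg_map (f : R →+* S) {I : Ideal R} (hI : (I.map f).FG) :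
    ∃ J ≤ I, J.FG ∧ J.map f = I.map f := by
  classical
  obtain ⟨t, ht, hspan⟩ := (Submodule.fg_span_iff_fg_span_finset_subset _).1 hI
  obtain ⟨s, hs, rfl⟩ := Finset.subset_set_image_iff.1 ht
  refine ⟨Ideal.span s, Ideal.span_le.2 hs, ⟨s, rfl⟩, ?_⟩
  rw [Ideal.map_span, ← Finset.coe_image]
  exact hspan.symm

lemma fg_of_fg_map_of_comap_map_eq {f : R →+* S}
    (hf : ∀ I : Ideal R, I.FG → (I.map f).comap f = I) {I : Ideal R} (hI : (I.map f).FG) :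
    I.FG := by
  obtain ⟨J, hJI, hJ, hmap⟩ := exists_fg_le_map_eq_of_fg_map f hI
  have hIJ : I ≤ J := by
    rw [← hf J hJ, hmap]
    exact Ideal.le_comap_map
  exact le_antisymm hIJ hJI ▸ hJ

lemma isNoetherianRing_of_comap_map_eq [IsNoetherianRing S] {f : R →+* S}
    (hf : ∀ I : Ideal R, I.FG → (I.map f).comap f = I) : IsNoetherianRing R :=
  ⟨fun _ ↦ fg_of_fg_map_of_comap_map_eq hf (IsNoetherian.noetherian _)⟩

lemma le_map_comap_sup_sq_of_surjective (f : R →+* S) (M : Ideal S)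
    (hf : Surjective ((Ideal.Quotient.mk (M ^ 2)).comp f)) :
    M ≤ (M.comap f).map f ⊔ M ^ 2 := by
  intro t ht
  obtain ⟨r, hr⟩ := hf (Ideal.Quotient.mk _ t)
  have hrt : t - f r ∈ M ^ 2 := (Ideal.Quotient.mk_eq_mk_iff_sub_mem _ _).1 hr.symm
  have hrM : f r ∈ M := (Submodule.sub_mem_iff_right M ht).1 (Ideal.pow_le_self two_ne_zero hrt)
  rw [← add_sub_cancel (f r) t]
  exact Submodule.add_mem_sup (Ideal.mem_map_of_mem f hrM) hrt

lemma map_comap_eq_of_surjective (f : R →+* S) {M : Ideal S} (hM : M.FG)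
    (hjac : M ≤ Ideal.jacobson ⊥) (hf : Surjective ((Ideal.Quotient.mk (M ^ 2)).comp f)) :
    (M.comap f).map f = M := by
  refine le_antisymm Ideal.map_comap_le
    (Submodule.le_of_le_smul_of_le_jacobson_bot hM hjac ?_)
  rw [smul_eq_mul, ← pow_two]
  exact le_map_comap_sup_sq_of_surjective f M hf

lemma pow_le_comap_map_pow (f : R →+* S) (I : Ideal R) (n : ℕ) :
    I ^ n ≤ (I.map f ^ n).comap f :=
  Ideal.map_le_iff_le_comap.1 (Ideal.map_pow f I n).le

end Extension

section Completion

variable {R : Type*} (S : Type*) [CommRing R] [CommRing S] [Algebra R S] (I : Ideal R)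

/-- The map `R ⧸ Iⁿ → S ⧸ (IS)ⁿ` induced by the structure map of an `R`-algebra `S`; as `n` varies,
these maps assemble to the map from the completion of `R` to that of `S`. -/
def quotientPowMapAlgHom (n : ℕ) : R ⧸ I ^ n →ₐ[R] S ⧸ I.map (algebraMap R S) ^ n :=
  Ideal.quotientMapₐ _ (Algebra.ofId R S) (pow_le_comap_map_pow (algebraMap R S) I n)

variable {I} in
lemma quotientPowMapAlgHom_injective {n : ℕ}
    (h : ((I ^ n).map (algebraMap R S)).comap (algebraMap R S) ≤ I ^ n) :
    Injective (quotientPowMapAlgHom S I n) := by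
  rw [Ideal.map_pow] at h
  exact Ideal.quotientMap_injective' (H := pow_le_comap_map_pow (algebraMap R S) I n) h

lemma factorₐ_comp_quotientPowMapAlgHom_comp_evalₐ {k n : ℕ} (hkn : k ≤ n) :
    (Ideal.Quotient.factorₐ R (Ideal.pow_le_pow_right hkn)).comp
        ((quotientPowMapAlgHom S I n).comp (AdicCompletion.evalₐ I n)) =
      (quotientPowMapAlgHom S I k).comp (AdicCompletion.evalₐ I k) := by
  ext x
  obtain ⟨x, rfl⟩ := AdicCompletion.mk_surjective I R x
  have hx : Ideal.Quotient.mk (I ^ k) (x.val n) = Ideal.Quotient.mk (I ^ k) (x.val k) :=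
    AdicCompletion.Ideal.mk_eq_mk I hkn x
  simp only [AlgHom.comp_apply, AdicCompletion.evalₐ_mk]
  exact congrArg (quotientPowMapAlgHom S I k) hx

variable [IsAdicComplete (I.map (algebraMap R S)) S]

/-- The canonical homomorphism from the `I`-adic completion of `R` to an `IS`-adically complete
`R`-algebra `S`. -/
noncomputable def adicCompletionAlgHom : AdicCompletion I R →ₐ[R] S :=
  IsAdicComplete.liftAlgHom (I.map (algebraMap R S))
    (fun n ↦ (quotientPowMapAlgHom S I n).comp (AdicCompletion.evalₐ I n))
    (factorₐ_comp_quotientPowMapAlgHom_comp_evalₐ S I)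

lemma mk_adicCompletionAlgHom (n : ℕ) (x : AdicCompletion I R) :
    Ideal.Quotient.mk (I.map (algebraMap R S) ^ n) (adicCompletionAlgHom S I x) =
      quotientPowMapAlgHom S I n (AdicCompletion.evalₐ I n x) :=
  IsAdicComplete.mk_liftAlgHom _ _ (factorₐ_comp_quotientPowMapAlgHom_comp_evalₐ S I) n x

variable {S I}

lemma adicCompletionAlgHom_injective
    (h : ∀ n, ((I ^ n).map (algebraMap R S)).comap (algebraMap R S) ≤ I ^ n) :
    Injective (adicCompletionAlgHom S I) := by
  intro x y hxy
  refine AdicCompletion.ext_evalₐ fun n ↦ quotientPowMapAlgHom_injective S (h n) ?_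
  rw [← mk_adicCompletionAlgHom, ← mk_adicCompletionAlgHom, hxy]

lemma adicCompletionAlgHom_surjective (hI : I.FG)
    (h : Surjective ((Ideal.Quotient.mk (I.map (algebraMap R S))).comp (algebraMap R S))) :
    Surjective (adicCompletionAlgHom S I) := by
  let J := I.map (algebraMap R (AdicCompletion I R))
  let φ : AdicCompletion I R →+* S := adicCompletionAlgHom S I
  have hcomplete : IsAdicComplete J (AdicCompletion I R) := AdicCompletion.isAdicComplete_self I hI
  have hφ : φ.comp (algebraMap R (AdicCompletion I R)) = algebraMap R S :=
    (adicCompletionAlgHom S I).comp_algebraMap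
  have hmap : J.map φ = I.map (algebraMap R S) := by rw [Ideal.map_map, hφ]
  have hhaus : IsHausdorff (J.map φ) S := by
    rw [hmap]
    infer_instance
  have hsurj : Surjective ((Ideal.Quotient.mk (J.map φ)).comp φ) := by
    rw [← hφ, ← RingHom.comp_assoc, ← Ideal.map_map] at h
    exact Surjective.of_comp h
  exact surjective_of_mk_map_comp_surjective φ hsurj

end Completion

theorem nonempty_adicCompletion_comap_algEquiv {R S : Type*} [CommRing R] [CommRing S]
    [Algebra R S] {M : Ideal S} [IsAdicComplete M S] (hM : M.FG)
    (hsurj : Surjective ((Ideal.Quotient.mk (M ^ 2)).comp (algebraMap R S)))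
    (hcontract : ∀ I : Ideal R, I.FG → (I.map (algebraMap R S)).comap (algebraMap R S) = I) :
    Nonempty (AdicCompletion (M.comap (algebraMap R S)) R ≃ₐ[R] S) := by
  set m := M.comap (algebraMap R S)
  have hmap : m.map (algebraMap R S) = M :=
    map_comap_eq_of_surjective _ hM (IsAdicComplete.le_jacobson_bot M) hsurj
  have hm : m.FG := fg_of_fg_map_of_comap_map_eq hcontract (hmap.symm ▸ hM)
  have hcomplete : IsAdicComplete (m.map (algebraMap R S)) S := hmap.symm ▸ ‹IsAdicComplete M S›
  have hsurj_one : Surjective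
      ((Ideal.Quotient.mk (m.map (algebraMap R S))).comp (algebraMap R S)) := by
    rw [hmap]
    exact (Ideal.Quotient.factor_surjective (Ideal.pow_le_self two_ne_zero)).comp hsurj
  exact ⟨AlgEquiv.ofBijective (adicCompletionAlgHom S m)
    ⟨adicCompletionAlgHom_injective fun n ↦ (hcontract _ hm.pow).le,
      adicCompletionAlgHom_surjective hm hsurj_one⟩⟩

theorem statement_6_general {R T : Type*} [CommRing R] [CommRing T] [IsNoetherianRing T]
    [Algebra R T] (M : Ideal T) [IsAdicComplete M T]
    (hsurj : Surjective ((Ideal.Quotient.mk (M ^ 2)).comp (algebraMap R T)))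
    (hcontract : ∀ I : Ideal R, I.FG → (I.map (algebraMap R T)).comap (algebraMap R T) = I) :
    IsNoetherianRing R ∧ Nonempty (AdicCompletion (M.comap (algebraMap R T)) R ≃ₐ[R] T) :=
  ⟨isNoetherianRing_of_comap_map_eq hcontract,
    nonempty_adicCompletion_comap_algEquiv (IsNoetherian.noetherian M) hsurj hcontract⟩

/-- Heitmann 1994, Proposition 1. -/
theorem statement_6 (T : Type*) [CommRing T] [IsNoetherianRing T] [IsLocalRing T]
    [IsAdicComplete (IsLocalRing.maximalIdeal T) T]
    (R : Subring T) [IsLocalRing R]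
    (hmax : IsLocalRing.maximalIdeal R = (IsLocalRing.maximalIdeal T).comap R.subtype)
    (hsurj : Function.Surjective
      ((Ideal.Quotient.mk ((IsLocalRing.maximalIdeal T) ^ 2)).comp R.subtype))
    (hcontract : ∀ I : Ideal R, I.FG → (I.map R.subtype).comap R.subtype = I) :
    IsNoetherianRing R ∧
    ∃ e : AdicCompletion (IsLocalRing.maximalIdeal R) R ≃+* T,
      ∀ r : R, e (algebraMap R (AdicCompletion (IsLocalRing.maximalIdeal R) R) r) = (r : T) := by
  obtain ⟨hR, ⟨e⟩⟩ := statement_6_general (R := R) (IsLocalRing.maximalIdeal T) hsurj hcontract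
  rw [hmax]
  exact ⟨hR, e.toRingEquiv, e.commutes⟩
end
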